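/- Let D_1, D_2, D_3, D_4 be the four chord diagrams of order n obtained from a common configuration as described. For every set A of chords with c ∈ A and c' ∈ A (regarding A as a set of chords of each D_i), the genera of the corresponding partial duals satisfy g_A(D_1) = g_A(D_4) and g_A(D_2) = g_A(D_3). -/

import Mathlib

/-- Number of cycles (orbits, counting fixed points) of a self-map:
the number of connected components of its functional graph. For a permutation
this is the number of cycles, counting fixed points. -/
noncomputable def cycles {α : Type*} (f : α → α) : ℕ :=
  Nat.card (Quot fun i j => f i = j)

-- `restrictTo σ A` agrees with `σ` on `A` and fixes everything else.
-- If `A` is the set of endpoints of a set of chords of `σ`, this is `σ_A`.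
open Classical in
noncomputable def restrictTo {α : Type*} (f : α → α) (A : Set α) : α → α :=
  fun i => if i ∈ A then f i else i

/-- The rotation `i ↦ i + 1` of the `2n` points of a chord diagram. -/
def rot (n : ℕ) : ZMod (2 * n) → ZMod (2 * n) := fun i => i + 1

/-- Genus of the partial dual of the chord diagram `σ` relative to the set of
chords whose endpoint set is the (`σ`-invariant) set `A`. -/
noncomputable def pdGenus (n : ℕ) (σ : ZMod (2 * n) → ZMod (2 * n))
    (A : Set (ZMod (2 * n))) : ℕ :=
  (n + 2 - cycles (rot n ∘ restrictTo σ A) - cycles (rot n ∘ restrictTo σ Aᶜ)) / 2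

/-- Genus of the one-vertex ribbon graph of the chord diagram `σ`. -/
noncomputable def genus (n : ℕ) (σ : ZMod (2 * n) → ZMod (2 * n)) : ℕ :=
  (n + 1 - cycles (rot n ∘ σ)) / 2

/-- The partial-dual genus polynomial `∂Γ_σ(z) = Σ_A z^{g_A(σ)}`, the sum being
over all sets `A` of chords of `σ` (encoded as `σ`-invariant subsets of the
`2n` points). -/
noncomputable def pdPoly (n : ℕ) (σ : ZMod (2 * n) → ZMod (2 * n)) : Polynomial ℤ :=
  if h : n = 0 then 1 else
    haveI : NeZero (2 * n) := ⟨by omega⟩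
    ∑ A ∈ Finset.univ.filter (fun A : Finset (ZMod (2 * n)) => ∀ i ∈ A, σ i ∈ A),
      Polynomial.X ^ pdGenus n σ (↑A : Set (ZMod (2 * n)))

/-- `φ : ZMod (2n-1) → ZMod (2n)` is the cyclic-order-preserving identification of
the `2n-1` configuration points with the complement of the inserted point `x`:
it avoids `x` and each step advances by one position on the circle, skipping `x`. -/
def IsInsertion {m N : ℕ} (φ : ZMod m → ZMod N) (x : ZMod N) : Prop :=
  φ 0 ≠ x ∧ ∀ j, φ (j + 1) = if φ j + 1 = x then φ j + 2 else φ j + 1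

/-- A configuration of `2n-1` marked points on the circle: a distinguished chord
`c = {p, q}`, a distinguished unpaired point `u`, and a fixed-point-free pairing
of the remaining `2n-4` points into background chords; all encoded by the
involution `τ` whose unique fixed point is `u` and with `τ p = q`. -/
def IsConfig (n : ℕ) (τ : ZMod (2 * n - 1) → ZMod (2 * n - 1))
    (p q u : ZMod (2 * n - 1)) : Prop :=
  Function.Involutive τ ∧ τ p = q ∧ p ≠ q ∧ τ u = u ∧ ∀ j, τ j = j → j = u

/-- `D` is the chord diagram of order `n` obtained from the configuration `τ`
by inserting the extra point `x` (via the order-preserving identification `φ`)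
together with the new chord `c' = {x, u}`; all other chords are unchanged. -/
def IsInsertedDiagram (n : ℕ) (τ : ZMod (2 * n - 1) → ZMod (2 * n - 1))
    (u : ZMod (2 * n - 1)) (φ : ZMod (2 * n - 1) → ZMod (2 * n)) (x : ZMod (2 * n))
    (D : ZMod (2 * n) → ZMod (2 * n)) : Prop :=
  IsInsertion φ x ∧ (∀ j, j ≠ u → D (φ j) = φ (τ j)) ∧ D (φ u) = x ∧ D x = φ u

section Helpers

theorem quot_step {α : Type*} (f : α → α) {a b : α} (h : f a = b) :
    (Quot.mk (fun i j => f i = j) a) = Quot.mk (fun i j => f i = j) b :=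
  Quot.sound h

theorem cycles_eq_of_maps {α β : Type*} (f : α → α) (g : β → β) (h : α → β) (k : β → α)
    (hh : ∀ a, Quot.mk (fun i j => g i = j) (h a) = Quot.mk (fun i j => g i = j) (h (f a)))
    (hk : ∀ b, Quot.mk (fun i j => f i = j) (k b) = Quot.mk (fun i j => f i = j) (k (g b)))
    (hkh : ∀ a, Quot.mk (fun i j => f i = j) (k (h a)) = Quot.mk (fun i j => f i = j) a)
    (hhk : ∀ b, Quot.mk (fun i j => g i = j) (h (k b)) = Quot.mk (fun i j => g i = j) b) :
    cycles f = cycles g := by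
  unfold cycles
  refine Nat.card_congr
    { toFun := Quot.lift (fun a => Quot.mk _ (h a)) ?_
      invFun := Quot.lift (fun b => Quot.mk _ (k b)) ?_
      left_inv := ?_
      right_inv := ?_ }
  · rintro a _ rfl; exact hh a
  · rintro a _ rfl; exact hk a
  · rintro ⟨a⟩; exact hkh a
  · rintro ⟨a⟩; exact hhk a

theorem cycles_conj {α β : Type*} (f : α → α) (g : β → β) (e : α ≃ β)
    (he : ∀ a, e (f a) = g (e a)) : cycles f = cycles g := by
  refine cycles_eq_of_maps f g e e.symm ?_ ?_ ?_ ?_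
  · intro a; exact quot_step g (he a).symm
  · intro b; apply quot_step f; apply e.injective; simp [he]
  · intro a; simp
  · intro b; simp

/-- Rotation of the circle after inserting `none` right after `some w`. -/
def rotO {m : ℕ} (w : ZMod m) : Option (ZMod m) → Option (ZMod m)
  | none => some (w + 1)
  | some j => if j = w then none else some (j + 1)

/-- The involution with the extra chord `{none, some u}`. -/
def addChord {m : ℕ} (t : ZMod m → ZMod m) (u : ZMod m) : Option (ZMod m) → Option (ZMod m)
  | none => some u
  | some j => if j = u then none else some (t j)

theorem cycles_compl {m : ℕ} (w : ZMod m) (s : ZMod m → ZMod m) :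
    cycles (rotO w ∘ Option.map s) = cycles (fun j => s j + 1) := by
  refine cycles_eq_of_maps _ _ (fun o => o.elim (w + 1) id) some ?_ ?_ ?_ ?_
  · rintro (_ | j)
    · simp [rotO]
    · apply quot_step
      by_cases h : s j = w <;> simp [rotO, h]
  · intro j
    by_cases h : s j = w
    · rw [quot_step (rotO w ∘ Option.map s) (a := some j) (b := none) (by simp [rotO, h])]
      apply quot_step; simp [rotO, h]
    · apply quot_step; simp [rotO, h]
  · rintro (_ | j)
    · symm; apply quot_step; simp [rotO]
    · rfl
  · intro j; rfl

theorem cycles_main {m : ℕ} (t : ZMod m → ZMod m) (p q u : ZMod m)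
    (ht : Function.Injective t) (hpq : t p = q) (hu : t u = u) (hpu : p ≠ u) (hqu : q ≠ u) :
    cycles (rotO (p - 1) ∘ addChord t u) = cycles (rotO q ∘ addChord t u) := by
  set f := rotO (p - 1) ∘ addChord t u with hf
  set g := rotO q ∘ addChord t u with hg
  have f_none : f none = if u + 1 = p then none else some (u + 1) := by
    simp [hf, rotO, addChord, eq_sub_iff_add_eq]
  have f_u : f (some u) = some p := by simp [hf, rotO, addChord]
  have f_j : ∀ j, j ≠ u → f (some j) = if t j + 1 = p then none else some (t j + 1) := by
    intro j hj; simp [hf, rotO, addChord, hj, eq_sub_iff_add_eq]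
  have g_none : g none = some (u + 1) := by simp [hg, rotO, addChord, hqu.symm]
  have g_u : g (some u) = some (q + 1) := by simp [hg, rotO, addChord]
  have g_p : g (some p) = none := by simp [hg, rotO, addChord, hpu, hpq]
  have g_j : ∀ j, j ≠ u → j ≠ p → g (some j) = some (t j + 1) := by
    intro j hj hjp
    have : t j ≠ q := fun h => hjp (ht (h.trans hpq.symm))
    simp [hg, rotO, addChord, hj, this]
  clear_value f g
  refine cycles_eq_of_maps f g (fun o => if o = some p then some u else o)
    (fun o => if o = some p then none else o) ?_ ?_ ?_ ?_
  · rintro (_ | j)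
    · rw [f_none]
      by_cases h : u + 1 = p
      · simp [h]
      · simp only [h, if_false, Option.some.injEq, reduceCtorEq]
        exact quot_step g g_none
    · by_cases hju : j = u
      · subst hju; simp [f_u]
      by_cases hjp : j = p
      · subst hjp
        rw [f_j j hju, hpq]
        by_cases h : q + 1 = j
        · simp only [h, if_true, reduceCtorEq, if_false]
          exact (quot_step g (g_u.trans (by rw [h]))).trans (quot_step g g_p)
        · simp only [h, if_true, Option.some.injEq, if_false]
          exact quot_step g g_u
      · rw [f_j j hju]
        by_cases h : t j + 1 = p
        · simp only [h, hjp, if_true, reduceCtorEq, Option.some.injEq, if_false]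
          exact (quot_step g ((g_j j hju hjp).trans (by rw [h]))).trans (quot_step g g_p)
        · simp only [h, hjp, Option.some.injEq, if_false]
          exact quot_step g (g_j j hju hjp)
  · rintro (_ | j)
    · rw [g_none]
      by_cases h : u + 1 = p
      · simp [h]
      · simp only [h, if_false, Option.some.injEq, reduceCtorEq]
        exact quot_step f (by rw [f_none, if_neg h])
    · by_cases hju : j = u
      · subst hju
        rw [g_u]
        simp only [Option.some.injEq, hpu.symm, if_false]
        rw [quot_step f f_u]
        apply quot_step f
        rw [f_j p hpu, hpq]
      by_cases hjp : j = p
      · subst hjp; simp [g_p]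
      · rw [g_j j hju hjp]
        simp only [Option.some.injEq, hjp, if_false]
        exact quot_step f (f_j j hju)
  · rintro (_ | j)
    · simp
    · by_cases hjp : j = p
      · subst hjp
        simp only [if_true, Option.some.injEq, hpu.symm, if_false]
        exact quot_step f f_u
      · simp [hjp]
  · rintro (_ | j)
    · simp
    · by_cases hjp : j = p
      · subst hjp
        simp only [if_true, reduceCtorEq, if_false]
        exact (quot_step g g_p).symm
      · simp [hjp]

theorem zmod_all {N : ℕ} [NeZero N] (P : ZMod N → Prop) (a : ZMod N) (ha : P a)
    (hs : ∀ j, P j → P (j + 1)) (b : ZMod N) : P b := by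
  have key : ∀ k : ℕ, P (a + k) := by
    intro k
    induction k with
    | zero => simpa using ha
    | succ k ih => have := hs _ ih; push_cast; rwa [← add_assoc]
  have := key (b - a).val
  rwa [ZMod.natCast_zmod_val, add_sub_cancel] at this

theorem insertion_ne {n : ℕ} (hn : 2 ≤ n) {φ : ZMod (2 * n - 1) → ZMod (2 * n)}
    {x : ZMod (2 * n)} (h : IsInsertion φ x) (j) : φ j ≠ x := by
  have : NeZero (2 * n - 1) := ⟨by omega⟩
  have : Fact (1 < 2 * n) := ⟨by omega⟩
  refine zmod_all (fun j => φ j ≠ x) 0 h.1 ?_ j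
  intro j hj
  show φ (j + 1) ≠ x
  rw [h.2 j]
  split_ifs with h1
  · rw [← h1]; intro h2
    have : (1 : ZMod (2 * n)) = 0 := by linear_combination h2
    exact one_ne_zero this
  · exact h1

theorem pdGenus_model (n : ℕ) (hn : 2 ≤ n)
    (τ : ZMod (2 * n - 1) → ZMod (2 * n - 1)) (u : ZMod (2 * n - 1))
    (φ : ZMod (2 * n - 1) → ZMod (2 * n)) (x : ZMod (2 * n)) (D : ZMod (2 * n) → ZMod (2 * n))
    (h : IsInsertedDiagram n τ u φ x D) (w : ZMod (2 * n - 1)) (hw : x = φ w + 1)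
    (B : Set (ZMod (2 * n - 1))) (hu : u ∈ B) :
    pdGenus n D (φ '' B ∪ {x}) =
      (n + 2 - cycles (rotO w ∘ addChord (restrictTo τ B) u)
        - cycles (rotO w ∘ Option.map (restrictTo τ Bᶜ))) / 2 := by
  obtain ⟨hI, hD, hDu, hDx⟩ := h
  have hne := insertion_ne hn hI
  have : NeZero (2 * n - 1) := ⟨by omega⟩
  have : NeZero (2 * n) := ⟨by omega⟩
  let E : Option (ZMod (2 * n - 1)) → ZMod (2 * n) := fun o => o.elim x φ
  have hsurj : Function.Surjective E := by
    refine zmod_all (fun b => ∃ o, E o = b) x ⟨none, rfl⟩ ?_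
    rintro _ ⟨_ | j, rfl⟩
    · refine ⟨some (w + 1), ?_⟩
      show φ (w + 1) = x + 1
      rw [hI.2, if_pos hw.symm, hw]; ring
    · by_cases hj : φ j + 1 = x
      · exact ⟨none, hj.symm⟩
      · refine ⟨some (j + 1), ?_⟩
        show φ (j + 1) = φ j + 1
        rw [hI.2, if_neg hj]
  have hbij : Function.Bijective E := by
    rw [Fintype.bijective_iff_surjective_and_card]
    refine ⟨hsurj, ?_⟩
    rw [Fintype.card_option, ZMod.card, ZMod.card]; omega
  have hinj : Function.Injective φ := fun a b hab =>
    Option.some_injective _ (hbij.1 (show E (some a) = E (some b) from hab))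
  let e := Equiv.ofBijective E hbij
  have hrot : ∀ o, E (rotO w o) = rot n (E o) := by
    rintro (_ | j)
    · show φ (w + 1) = x + 1
      rw [hI.2, if_pos hw.symm, hw]; ring
    · by_cases hj : j = w
      · subst hj; simp [rotO, rot, E, hw]
      · have : φ j + 1 ≠ x := by
          rw [hw]; intro h; exact hj (hinj (add_right_cancel h))
        simp only [rotO, hj, if_false]
        show φ (j + 1) = φ j + 1
        rw [hI.2, if_neg this]
  have hmem : ∀ j, φ j ∈ φ '' B ∪ {x} ↔ j ∈ B := by
    intro j; simp [hne j, hinj.eq_iff]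
  have h1 : ∀ o, E (addChord (restrictTo τ B) u o) = restrictTo D (φ '' B ∪ {x}) (E o) := by
    rintro (_ | j)
    · simp [E, addChord, restrictTo, hDx]
    · show _ = restrictTo D (φ '' B ∪ {x}) (φ j)
      by_cases hjB : j ∈ B
      · have e1 : restrictTo D (φ '' B ∪ {x}) (φ j) = D (φ j) := if_pos ((hmem j).2 hjB)
        rw [e1]
        by_cases hj : j = u
        · subst hj; simp [E, addChord, hDu]
        · simp [E, addChord, restrictTo, hj, hjB, hD]
      · have e1 : restrictTo D (φ '' B ∪ {x}) (φ j) = φ j :=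
          if_neg (fun h => hjB ((hmem j).1 h))
        have hj : j ≠ u := fun h => hjB (h ▸ hu)
        rw [e1]
        simp [E, addChord, restrictTo, hj, hjB]
  have h2 : ∀ o, E (Option.map (restrictTo τ Bᶜ) o) = restrictTo D (φ '' B ∪ {x})ᶜ (E o) := by
    rintro (_ | j)
    · simp [E, restrictTo]
    · show φ _ = restrictTo D (φ '' B ∪ {x})ᶜ (φ j)
      by_cases hjB : j ∈ B
      · have e1 : restrictTo D (φ '' B ∪ {x})ᶜ (φ j) = φ j :=
          if_neg (fun h => h ((hmem j).2 hjB))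
        rw [e1]
        simp [restrictTo, hjB]
      · have e1 : restrictTo D (φ '' B ∪ {x})ᶜ (φ j) = D (φ j) :=
          if_pos (fun h => hjB ((hmem j).1 h))
        have hj : j ≠ u := fun h => hjB (h ▸ hu)
        rw [e1, hD j hj]
        simp [restrictTo, hjB]
  unfold pdGenus
  rw [cycles_conj (rotO w ∘ addChord (restrictTo τ B) u) (rot n ∘ restrictTo D (φ '' B ∪ {x})) e
      (fun o => (hrot _).trans (congrArg _ (h1 o))),
    cycles_conj (rotO w ∘ Option.map (restrictTo τ Bᶜ)) (rot n ∘ restrictTo D (φ '' B ∪ {x})ᶜ) e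
      (fun o => (hrot _).trans (congrArg _ (h2 o)))]

theorem pdGenus_pair (n : ℕ) (hn : 2 ≤ n)
    (τ : ZMod (2 * n - 1) → ZMod (2 * n - 1)) (p q u : ZMod (2 * n - 1))
    (hτ : IsConfig n τ p q u)
    (φ₁ φ₄ : ZMod (2 * n - 1) → ZMod (2 * n))
    (x₁ x₄ : ZMod (2 * n))
    (D₁ D₄ : ZMod (2 * n) → ZMod (2 * n))
    (h₁ : IsInsertedDiagram n τ u φ₁ x₁ D₁) (hx₁ : x₁ + 1 = φ₁ p)
    (h₄ : IsInsertedDiagram n τ u φ₄ x₄ D₄) (hx₄ : x₄ = φ₄ q + 1)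
    (B : Set (ZMod (2 * n - 1))) (hB : ∀ j ∈ B, τ j ∈ B)
    (hc : p ∈ B) (hc' : u ∈ B) :
    pdGenus n D₁ (φ₁ '' B ∪ {x₁}) = pdGenus n D₄ (φ₄ '' B ∪ {x₄}) := by
  obtain ⟨hinv, hpq, hne, hu, -⟩ := hτ
  have hw : x₁ = φ₁ (p - 1) + 1 := by
    have h := h₁.1.2 (p - 1)
    rw [sub_add_cancel, ← hx₁] at h
    split_ifs at h with h'
    · exact h'.symm
    · exact absurd (add_right_cancel h).symm (insertion_ne hn h₁.1 _)
  rw [pdGenus_model n hn τ u φ₁ x₁ D₁ h₁ (p - 1) hw B hc',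
    pdGenus_model n hn τ u φ₄ x₄ D₄ h₄ q hx₄ B hc', cycles_compl, cycles_compl,
    cycles_main (restrictTo τ B) p q u]
  · apply Function.Involutive.injective
    intro j
    unfold restrictTo
    by_cases hj : j ∈ B
    · simp [hj, hB j hj, hinv j]
    · simp [hj]
  · simp [restrictTo, hc, hpq]
  · simp [restrictTo, hu]
  · rintro rfl; exact hne (hu.symm.trans hpq)
  · rintro rfl; exact hne ((hinv.injective (hpq.trans hu.symm)))

end Helpers

/-- For a set `A` of chords with `c ∈ A` and `c' ∈ A`, the partial duals satisfy
`g_A(D₁) = g_A(D₄)` and `g_A(D₂) = g_A(D₃)`. -/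
theorem pdGenus_eq_of_c_and_c' (n : ℕ) (hn : 2 ≤ n)
    (τ : ZMod (2 * n - 1) → ZMod (2 * n - 1)) (p q u : ZMod (2 * n - 1))
    (hτ : IsConfig n τ p q u)
    (φ₁ φ₂ φ₃ φ₄ : ZMod (2 * n - 1) → ZMod (2 * n))
    (x₁ x₂ x₃ x₄ : ZMod (2 * n))
    (D₁ D₂ D₃ D₄ : ZMod (2 * n) → ZMod (2 * n))
    (h₁ : IsInsertedDiagram n τ u φ₁ x₁ D₁) (hx₁ : x₁ + 1 = φ₁ p)
    (h₂ : IsInsertedDiagram n τ u φ₂ x₂ D₂) (hx₂ : x₂ = φ₂ p + 1)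
    (h₃ : IsInsertedDiagram n τ u φ₃ x₃ D₃) (hx₃ : x₃ + 1 = φ₃ q)
    (h₄ : IsInsertedDiagram n τ u φ₄ x₄ D₄) (hx₄ : x₄ = φ₄ q + 1)
    (B : Set (ZMod (2 * n - 1))) (hB : ∀ j ∈ B, τ j ∈ B)
    (hc : p ∈ B) (hc' : u ∈ B) :
    pdGenus n D₁ (φ₁ '' B ∪ {x₁}) = pdGenus n D₄ (φ₄ '' B ∪ {x₄}) ∧
    pdGenus n D₂ (φ₂ '' B ∪ {x₂}) = pdGenus n D₃ (φ₃ '' B ∪ {x₃}) := by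
  have hτ' : IsConfig n τ q p u :=
    ⟨hτ.1, by rw [← hτ.2.1]; exact hτ.1 p, hτ.2.2.1.symm, hτ.2.2.2⟩
  have hq : q ∈ B := hτ.2.1 ▸ hB p hc
  exact ⟨pdGenus_pair n hn τ p q u hτ φ₁ φ₄ x₁ x₄ D₁ D₄ h₁ hx₁ h₄ hx₄ B hB hc hc',
    (pdGenus_pair n hn τ q p u hτ' φ₃ φ₂ x₃ x₂ D₃ D₂ h₃ hx₃ h₂ hx₂ B hB hq hc').symm⟩
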